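/- There exists a class C of finite simple graphs that is f_k-bounded for every k ≥ 1 (in fact f_k(G) ≤ 2 for every G in C and every k ≥ 1) but is not nowhere dense. Concretely, the class C = {G_n : n ≥ 1}, where G_n is obtained from the complete bipartite graph K_{n,n} by subdividing every edge once, has these properties. -/

import Mathlib

open scoped Classical
open scoped Function

namespace InducedArboricity

/-- The edges of the subgraph of `G` induced by vertex set `S`, viewed as edges of `G`. -/
def forestEdges {V : Type*} (G : SimpleGraph V) (S : Set V) : Set (Sym2 V) :=
  {e | e ∈ G.edgeSet ∧ ∀ x ∈ e, x ∈ S}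

/-- The number of edges of the connected component of `v` in `H`. -/
noncomputable def compEdgeCount {W : Type*} (H : SimpleGraph W) (v : W) : ℕ :=
  {e | e ∈ H.edgeSet ∧ ∀ x ∈ e, H.Reachable v x}.ncard

/-- `S` induces a `k`-strong forest in `G`: the induced subgraph is acyclic and each of its
connected components has at least `k` edges. -/
def IsStrongForest {V : Type*} (G : SimpleGraph V) (k : ℕ) (S : Set V) : Prop :=
  (G.induce S).IsAcyclic ∧ ∀ v : S, k ≤ compEdgeCount (G.induce S) v

/-- An edge `e` of `G` is `k`-valid if it lies in some `k`-strong forest of `G`. -/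
def KValid {V : Type*} (G : SimpleGraph V) (k : ℕ) (e : Sym2 V) : Prop :=
  ∃ S : Set V, IsStrongForest G k S ∧ e ∈ forestEdges G S

/-- The `k`-strong induced arboricity: the least number of `k`-strong forests of `G`
covering all `k`-valid edges of `G`. -/
noncomputable def fStrong {V : Type*} (G : SimpleGraph V) (k : ℕ) : ℕ :=
  sInf {N | ∃ F : Fin N → Set V,
    (∀ i, IsStrongForest G k (F i)) ∧
    ∀ e : Sym2 V, KValid G k e → ∃ i, e ∈ forestEdges G (F i)}

/-- `G` is a `d`-shallow minor of `H`. -/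
def IsShallowMinor {V W : Type*} (d : ℕ) (G : SimpleGraph V) (H : SimpleGraph W) : Prop :=
  ∃ B : V → Set W,
    Pairwise (Disjoint on B) ∧
    (∀ v, ∃ c : B v, ∀ y : B v,
      (H.induce (B v)).Reachable c y ∧ (H.induce (B v)).dist c y ≤ d) ∧
    (∀ u v, G.Adj u v → ∃ x ∈ B u, ∃ y ∈ B v, H.Adj x y)

/-- A class of finite simple graphs, one set of graphs for each number of vertices. -/
def GraphClass : Type :=
  ∀ n : ℕ, Set (SimpleGraph (Fin n))

/-- A class of graphs has bounded expansion if for every `d` there is a constant `a` such that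
every `d`-shallow minor of a member of the class has at most `a` times as many edges
as vertices. -/
def BoundedExpansion (C : GraphClass) : Prop :=
  ∀ d : ℕ, ∃ a : ℕ, ∀ (m : ℕ) (G : SimpleGraph (Fin m)),
    (∃ n : ℕ, ∃ H ∈ C n, IsShallowMinor d G H) → G.edgeSet.ncard ≤ a * m

/-- A class of graphs is nowhere dense if for every `d` some graph is not a `d`-shallow minor
of any member of the class. -/
def NowhereDense (C : GraphClass) : Prop :=
  ∀ d : ℕ, ∃ (m : ℕ) (G : SimpleGraph (Fin m)), ¬ ∃ n : ℕ, ∃ H ∈ C n, IsShallowMinor d G H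

/-- The closed neighborhood of `v` in `G`. -/
def closedNbr {V : Type*} (G : SimpleGraph V) (v : V) : Set V :=
  insert v (G.neighborSet v)

/-- The sum of the labels over the closed neighborhood of `v`. -/
noncomputable def closedNbrSum {V : Type*} [Fintype V] (G : SimpleGraph V)
    (f : V → ℕ) (v : V) : ℕ :=
  ∑ x : V, if x ∈ closedNbr G v then f x else 0

/-- A labeling is distinguishing if adjacent vertices with different closed neighborhoods
receive different label sums over their closed neighborhoods. -/
def Distinguishing {V : Type*} [Fintype V] (G : SimpleGraph V) (f : V → ℕ) : Prop :=
  ∀ u v : V, G.Adj u v → closedNbr G u ≠ closedNbr G v →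
    closedNbrSum G f u ≠ closedNbrSum G f v

/-- The adjacent closed vertex-distinguishing number of `G`. -/
noncomputable def disNumber {V : Type*} [Fintype V] (G : SimpleGraph V) : ℕ :=
  sInf {L | 1 ≤ L ∧ ∃ f : V → ℕ, (∀ v, 1 ≤ f v ∧ f v ≤ L) ∧ Distinguishing G f}

/-- A proper coloring in which any two color classes together induce a forest. -/
def IsAcyclicColoring {V : Type*} (G : SimpleGraph V) {m : ℕ} (c : V → Fin m) : Prop :=
  (∀ u v : V, G.Adj u v → c u ≠ c v) ∧
  ∀ i j : Fin m, (G.induce {v | c v = i ∨ c v = j}).IsAcyclic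

/-- The acyclic chromatic number of `G`. -/
noncomputable def chiAcyc {V : Type*} (G : SimpleGraph V) : ℕ :=
  sInf {m | ∃ c : V → Fin m, IsAcyclicColoring G c}

/-- The edge arboricity of `G`: the least number of (not necessarily induced) forests
covering all edges of `G`. -/
noncomputable def arboricity {V : Type*} (G : SimpleGraph V) : ℕ :=
  sInf {N | ∃ F : Fin N → SimpleGraph V,
    (∀ i, F i ≤ G ∧ (F i).IsAcyclic) ∧
    ∀ e ∈ G.edgeSet, ∃ i, e ∈ (F i).edgeSet}

/-- `G` admits a tree decomposition of width at most `t`. -/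
def HasTreewidthAtMost {V : Type*} (G : SimpleGraph V) (t : ℕ) : Prop :=
  ∃ (ι : Type) (T : SimpleGraph ι) (B : ι → Finset V),
    T.IsTree ∧
    (∀ e ∈ G.edgeSet, ∃ i, ∀ x ∈ e, x ∈ B i) ∧
    (∀ v : V, (T.induce {i | v ∈ B i}).Connected) ∧
    (∀ i, (B i).card ≤ t + 1)

/-- The tree-width of `G`. -/
noncomputable def treewidth {V : Type*} (G : SimpleGraph V) : ℕ :=
  sInf {t | HasTreewidthAtMost G t}

/-- `G` has tree-depth at most `d`: there is a "forest order" on the vertices (the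
ancestor order of a rooted spanning forest) in which ancestor sets are chains of at most
`d` vertices and endpoints of edges of `G` are comparable.  Equivalently, every connected
component of `G` is a subgraph of the transitive closure of a rooted tree of depth `d`. -/
def HasTreedepthAtMost {V : Type*} (G : SimpleGraph V) (d : ℕ) : Prop :=
  ∃ le : V → V → Prop, IsPartialOrder V le ∧
    (∀ v : V, IsChain le {u | le u v}) ∧
    (∀ u v : V, G.Adj u v → le u v ∨ le v u) ∧
    (∀ v : V, {u | le u v}.ncard ≤ d)

/-- The tree-depth of `G`. -/
noncomputable def treedepth {V : Type*} (G : SimpleGraph V) : ℕ :=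
  sInf {d | HasTreedepthAtMost G d}

/-- `G` is a minor of `H`, witnessed by disjoint connected branch sets. -/
def IsMinorOf {V W : Type*} (G : SimpleGraph V) (H : SimpleGraph W) : Prop :=
  ∃ B : V → Set W,
    Pairwise (Disjoint on B) ∧
    (∀ v, (B v).Nonempty) ∧
    (∀ v, (H.induce (B v)).Connected) ∧
    (∀ u v, G.Adj u v → ∃ x ∈ B u, ∃ y ∈ B v, H.Adj x y)

/-- A class of graphs closed under taking minors. -/
def MinorClosed (C : GraphClass) : Prop :=
  ∀ (m n : ℕ) (G : SimpleGraph (Fin m)) (H : SimpleGraph (Fin n)),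
    H ∈ C n → IsMinorOf G H → G ∈ C m

/-- Planarity, via Wagner's characterization: no `K₅` and no `K₃,₃` minor. -/
def IsPlanar {V : Type*} (G : SimpleGraph V) : Prop :=
  ¬ IsMinorOf (SimpleGraph.completeGraph (Fin 5)) G ∧
  ¬ IsMinorOf (completeBipartiteGraph (Fin 3) (Fin 3)) G

/-- The graph obtained from the complete bipartite graph `K_{n,n}` by subdividing every edge
once: the original vertices are the summands `Fin n ⊕ Fin n`, and the subdivision vertex of
the edge between left vertex `i` and right vertex `j` is the pair `(i, j)`. -/
def subdividedKnn (n : ℕ) : SimpleGraph ((Fin n ⊕ Fin n) ⊕ Fin n × Fin n) :=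
  SimpleGraph.fromRel (fun a b =>
    match a, b with
    | Sum.inl (Sum.inl i), Sum.inr p => p.1 = i
    | Sum.inl (Sum.inr j), Sum.inr p => p.2 = j
    | _, _ => False)

/-- The class consisting of the graphs `G_n` (`n ≥ 1`), where `G_n` is obtained from
`K_{n,n}` by subdividing every edge once. -/
def subKnnClass : GraphClass :=
  fun m => {G | ∃ n : ℕ, 1 ≤ n ∧ Nonempty (G ≃g subdividedKnn n)}

/-!
The idea is that every vertex set missing at most `n - 2` vertices of `G_n` spans too many edges to
be a forest: `G_n` has `2n²` edges, and for `n ≥ 2` each deleted vertex destroys at most `n` of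
them. Hence an induced forest has at most `n² + n + 1` of the `n² + 2n` vertices, and so at most
`n² + n` edges. This maximum is attained by the tree obtained by deleting all but one of the right
vertices. That tree contains every edge at a left vertex, and its mirror image contains every edge
at a right vertex. So the two trees cover all edges when `k ≤ n² + n`, and there are no `k`-valid
edges when `k > n² + n`.

On the other hand, contracting in `G_n` the `i`-th left vertex, the `i`-th right vertex and the
subdivision vertices `(i, j)`, for each `i`, yields a complete graph, and the contracted
sets have radius at most 2.
-/

section General

variable {V W : Type*} {G : SimpleGraph V} {H : SimpleGraph W}

@[simp]
lemma mk_mem_forestEdges {S : Set V} {x y : V} :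
    s(x, y) ∈ forestEdges G S ↔ G.Adj x y ∧ x ∈ S ∧ y ∈ S := by
  simp [forestEdges]

lemma forestEdges_eq_image (G : SimpleGraph V) (S : Set V) :
    forestEdges G S = Sym2.map Subtype.val '' (G.induce S).edgeSet := by
  ext e
  constructor
  · induction e with | _ x y =>
    intro he
    obtain ⟨hxy, hx, hy⟩ := mk_mem_forestEdges.1 he
    exact ⟨s(⟨x, hx⟩, ⟨y, hy⟩), hxy, rfl⟩
  · rintro ⟨e, he, rfl⟩
    induction e with | _ x y =>
    exact mk_mem_forestEdges.2 ⟨he, x.2, y.2⟩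

lemma ncard_forestEdges (G : SimpleGraph V) (S : Set V) :
    (forestEdges G S).ncard = (G.induce S).edgeSet.ncard := by
  rw [forestEdges_eq_image,
    Set.ncard_image_of_injective _ (Sym2.map.injective Subtype.val_injective)]

lemma mem_forestEdges_preimage (f : G ↪g H) {S : Set W} {e : Sym2 V} :
    e ∈ forestEdges G (f ⁻¹' S) ↔ e.map f ∈ forestEdges H S := by
  induction e with | _ x y =>
  simp

lemma compEdgeCount_le_ncard_edgeSet [Finite V] (G : SimpleGraph V) (v : V) :
    compEdgeCount G v ≤ G.edgeSet.ncard :=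
  Set.ncard_le_ncard fun _ he => he.1

lemma compEdgeCount_of_preconnected (hG : G.Preconnected) (v : V) :
    compEdgeCount G v = G.edgeSet.ncard := by
  simp [compEdgeCount, hG v _]

lemma compEdgeCount_iso (φ : G ≃g H) (v : V) : compEdgeCount H (φ v) = compEdgeCount G v := by
  let R : Set W := {y | H.Reachable (φ v) y}
  have hR : φ ⁻¹' R = {x | G.Reachable v x} := Set.ext fun _ => φ.reachable_iff
  have hrange : forestEdges H R ⊆ Set.range (Sym2.map φ) :=
    fun e _ => ⟨e.map φ.symm, by simp [Sym2.map_map]⟩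
  calc compEdgeCount H (φ v) = (forestEdges H R).ncard := rfl
    _ = (Sym2.map φ ⁻¹' forestEdges H R).ncard :=
      (Set.ncard_preimage_of_injective_subset_range (Sym2.map.injective φ.injective) hrange).symm
    _ = (forestEdges G (φ ⁻¹' R)).ncard :=
      congrArg Set.ncard <| Set.ext fun _ => (mem_forestEdges_preimage φ.toEmbedding).symm
    _ = (forestEdges G {x | G.Reachable v x}).ncard := by rw [hR]
    _ = compEdgeCount G v := rfl

lemma IsStrongForest.preimage {k : ℕ} {S : Set W} (hS : IsStrongForest H k S) (φ : G ≃g H) :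
    IsStrongForest G k (φ ⁻¹' S) := by
  let ψ : G.induce (φ ⁻¹' S) ≃g H.induce S := φ.induce φ.bijective.bijOn_preimage
  exact ⟨ψ.isAcyclic_iff.2 hS.1, fun v => compEdgeCount_iso ψ v ▸ hS.2 (ψ v)⟩

lemma KValid.map {k : ℕ} {e : Sym2 V} (he : KValid G k e) (φ : G ≃g H) :
    KValid H k (e.map φ) := by
  obtain ⟨S, hS, heS⟩ := he
  refine ⟨φ.symm ⁻¹' S, hS.preimage φ.symm, (mem_forestEdges_preimage φ.symm.toEmbedding).2 ?_⟩
  simpa [Sym2.map_map, Function.comp_def] using heS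

lemma exists_strongForest_cover_of_iso {k N : ℕ} (φ : G ≃g H)
    (hH : ∃ F : Fin N → Set W, (∀ i, IsStrongForest H k (F i)) ∧
      ∀ e, KValid H k e → ∃ i, e ∈ forestEdges H (F i)) :
    ∃ F : Fin N → Set V, (∀ i, IsStrongForest G k (F i)) ∧
      ∀ e, KValid G k e → ∃ i, e ∈ forestEdges G (F i) := by
  obtain ⟨F, hF, hcover⟩ := hH
  refine ⟨fun i => φ ⁻¹' F i, fun i => (hF i).preimage φ, fun e he => ?_⟩
  obtain ⟨i, hi⟩ := hcover _ (he.map φ)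
  exact ⟨i, (mem_forestEdges_preimage φ.toEmbedding).2 hi⟩

lemma fStrong_congr (φ : G ≃g H) (k : ℕ) : fStrong G k = fStrong H k :=
  congrArg sInf <| Set.ext fun _ =>
    ⟨exists_strongForest_cover_of_iso φ.symm, exists_strongForest_cover_of_iso φ⟩

lemma ncard_edgeSet_lt_card_of_isAcyclic [Finite V] [Nonempty V] (hG : G.IsAcyclic) :
    G.edgeSet.ncard < Nat.card V := by
  obtain ⟨T, hGT, -, hT⟩ := SimpleGraph.connected_top.exists_isTree_le_of_le_of_isAcyclic
    (le_top : G ≤ ⊤) hG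
  calc G.edgeSet.ncard ≤ T.edgeSet.ncard := Set.ncard_le_ncard (SimpleGraph.edgeSet_mono hGT)
    _ < T.edgeSet.ncard + 1 := Nat.lt_succ_self _
    _ = Nat.card V := (SimpleGraph.isTree_iff_connected_and_card.1 hT).2

lemma ncard_forestEdges_lt_ncard {S : Set V} [Finite S] (hS : (G.induce S).IsAcyclic)
    (hne : S.Nonempty) : (forestEdges G S).ncard < S.ncard := by
  have := hne.to_subtype
  simpa [ncard_forestEdges] using ncard_edgeSet_lt_card_of_isAcyclic hS

lemma isStrongForest_of_connected {k : ℕ} {S : Set V} [Finite S]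
    (hS : (G.induce S).Connected) (hlt : (forestEdges G S).ncard < S.ncard)
    (hk : k < S.ncard) : IsStrongForest G k S := by
  have hle := hS.card_vert_le_card_edgeSet_add_one
  rw [ncard_forestEdges] at hlt
  simp only [Nat.card_coe_set_eq] at hle
  have hcard : (G.induce S).edgeSet.ncard + 1 = S.ncard := by omega
  refine ⟨(SimpleGraph.isTree_iff_connected_and_card.2 ⟨hS, hcard⟩).isAcyclic, fun v => ?_⟩
  rw [compEdgeCount_of_preconnected hS.preconnected]
  omega

lemma IsStrongForest.le_ncard_forestEdges {k : ℕ} {S : Set V} [Finite S]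
    (hS : IsStrongForest G k S) (hne : S.Nonempty) : k ≤ (forestEdges G S).ncard := by
  obtain ⟨v, hv⟩ := hne
  rw [ncard_forestEdges]
  exact (hS.2 ⟨v, hv⟩).trans (compEdgeCount_le_ncard_edgeSet _ _)

lemma ncard_edgeSet_le_add_mul_ncard_compl [Fintype V] (S : Set V) {d : ℕ}
    (hd : ∀ v ∉ S, G.degree v ≤ d) :
    G.edgeSet.ncard ≤ (forestEdges G S).ncard + Sᶜ.ncard * d := by
  have hsub : G.edgeSet ⊆ forestEdges G S ∪ Sᶜ.toFinset.biUnion (G.incidenceFinset ·) := by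
    intro e he
    by_cases heS : ∀ x ∈ e, x ∈ S
    · exact .inl ⟨he, heS⟩
    · push Not at heS
      obtain ⟨v, hve, hvS⟩ := heS
      exact .inr (Finset.mem_biUnion.2 ⟨v, by simpa using hvS, by simpa using ⟨he, hve⟩⟩)
  refine (Set.ncard_le_ncard hsub).trans <| (Set.ncard_union_le _ _).trans ?_
  rw [Set.ncard_coe_finset, Set.ncard_eq_toFinset_card' Sᶜ]
  gcongr
  refine Finset.card_biUnion_le_card_mul _ _ _ fun v hv => ?_
  rw [SimpleGraph.card_incidenceFinset_eq_degree]
  exact hd v (by simpa using hv)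

lemma reachable_and_dist_le_iff {u v : V} {d : ℕ} :
    G.Reachable u v ∧ G.dist u v ≤ d ↔ ∃ w : G.Walk u v, w.length ≤ d := by
  constructor
  · rintro ⟨hreach, hdist⟩
    obtain ⟨w, hw⟩ := hreach.exists_walk_length_eq_dist
    exact ⟨w, hw.trans_le hdist⟩
  · rintro ⟨w, hw⟩
    exact ⟨w.reachable, (SimpleGraph.dist_le w).trans hw⟩

lemma IsShallowMinor.of_copy {U : Type*} {d : ℕ} {K : SimpleGraph U} (h : IsShallowMinor d K G)
    (f : G.Copy H) : IsShallowMinor d K H := by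
  obtain ⟨B, hdisj, hrad, hadj⟩ := h
  refine ⟨fun v => f '' B v, fun u v huv => ?_, fun v => ?_, fun u v huv => ?_⟩
  · exact (Set.disjoint_image_iff f.injective).2 (hdisj huv)
  · obtain ⟨c, hc⟩ := hrad v
    let g := SimpleGraph.induceHom f.toHom (Set.mapsTo_image f (B v))
    refine ⟨g c, ?_⟩
    rintro ⟨_, y, hy, rfl⟩
    obtain ⟨w, hw⟩ := reachable_and_dist_le_iff.1 (hc ⟨y, hy⟩)
    exact reachable_and_dist_le_iff.2 ⟨w.map g, (w.length_map g).trans_le hw⟩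
  · obtain ⟨x, hx, y, hy, hxy⟩ := hadj u v huv
    exact ⟨f x, ⟨x, hx, rfl⟩, f y, ⟨y, hy, rfl⟩, f.toHom.map_adj hxy⟩

end General

section SubdividedKnn

variable {n : ℕ}

/-- The `i`-th vertex on the left side of `K_{n,n}`, as a vertex of its subdivision. -/
abbrev leftVertex (i : Fin n) : (Fin n ⊕ Fin n) ⊕ Fin n × Fin n := Sum.inl (Sum.inl i)

/-- The `j`-th vertex on the right side of `K_{n,n}`, as a vertex of its subdivision. -/
abbrev rightVertex (j : Fin n) : (Fin n ⊕ Fin n) ⊕ Fin n × Fin n := Sum.inl (Sum.inr j)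

/-- The subdivision vertex on the edge of `K_{n,n}` joining left vertex `p.1` to right vertex
`p.2`. -/
abbrev subdivVertex (p : Fin n × Fin n) : (Fin n ⊕ Fin n) ⊕ Fin n × Fin n := Sum.inr p

lemma adj_leftVertex {i : Fin n} {x : (Fin n ⊕ Fin n) ⊕ Fin n × Fin n} :
    (subdividedKnn n).Adj (leftVertex i) x ↔ ∃ j, x = subdivVertex (i, j) := by
  rcases x with (_ | _) | ⟨a, b⟩ <;> simp [subdividedKnn]

lemma adj_rightVertex {j : Fin n} {x : (Fin n ⊕ Fin n) ⊕ Fin n × Fin n} :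
    (subdividedKnn n).Adj (rightVertex j) x ↔ ∃ i, x = subdivVertex (i, j) := by
  rcases x with (_ | _) | ⟨a, b⟩ <;> simp [subdividedKnn]

lemma adj_subdivVertex {p : Fin n × Fin n} {x : (Fin n ⊕ Fin n) ⊕ Fin n × Fin n} :
    (subdividedKnn n).Adj (subdivVertex p) x ↔ x = leftVertex p.1 ∨ x = rightVertex p.2 := by
  rcases x with (_ | _) | _ <;> simp [subdividedKnn, eq_comm]

lemma exists_eq_of_mem_edgeSet_subdividedKnn {e : Sym2 ((Fin n ⊕ Fin n) ⊕ Fin n × Fin n)}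
    (he : e ∈ (subdividedKnn n).edgeSet) :
    ∃ p, e = s(leftVertex p.1, subdivVertex p) ∨ e = s(rightVertex p.2, subdivVertex p) := by
  induction e with | _ x y =>
  rcases x with (i | j) | p
  · obtain ⟨j, rfl⟩ := adj_leftVertex.1 he
    exact ⟨(i, j), .inl rfl⟩
  · obtain ⟨i, rfl⟩ := adj_rightVertex.1 he
    exact ⟨(i, j), .inr rfl⟩
  · obtain rfl | rfl := adj_subdivVertex.1 he
    · exact ⟨p, .inl Sym2.eq_swap⟩
    · exact ⟨p, .inr Sym2.eq_swap⟩

lemma degree_leftVertex (i : Fin n) : (subdividedKnn n).degree (leftVertex i) = n := by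
  have hnbr : (subdividedKnn n).neighborFinset (leftVertex i) =
      Finset.univ.image fun j => subdivVertex (i, j) := by
    ext x
    simp [adj_leftVertex, eq_comm]
  rw [← SimpleGraph.card_neighborFinset_eq_degree, hnbr,
    Finset.card_image_of_injective _ fun a b hab => by simpa using hab, Finset.card_fin]

lemma degree_rightVertex (j : Fin n) : (subdividedKnn n).degree (rightVertex j) = n := by
  have hnbr : (subdividedKnn n).neighborFinset (rightVertex j) =
      Finset.univ.image fun i => subdivVertex (i, j) := by
    ext x
    simp [adj_rightVertex, eq_comm]
  rw [← SimpleGraph.card_neighborFinset_eq_degree, hnbr,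
    Finset.card_image_of_injective _ fun a b hab => by simpa using hab, Finset.card_fin]

lemma degree_subdivVertex (p : Fin n × Fin n) :
    (subdividedKnn n).degree (subdivVertex p) = 2 := by
  have hnbr : (subdividedKnn n).neighborFinset (subdivVertex p) =
      {leftVertex p.1, rightVertex p.2} := by
    ext x
    simp [adj_subdivVertex]
  rw [← SimpleGraph.card_neighborFinset_eq_degree, hnbr, Finset.card_pair (by simp)]

lemma degree_subdividedKnn_le (hn : 2 ≤ n) (x : (Fin n ⊕ Fin n) ⊕ Fin n × Fin n) :
    (subdividedKnn n).degree x ≤ n := by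
  rcases x with (i | j) | p
  · exact (degree_leftVertex i).le
  · exact (degree_rightVertex j).le
  · exact (degree_subdivVertex p).trans_le hn

lemma ncard_edgeSet_subdividedKnn (n : ℕ) :
    (subdividedKnn n).edgeSet.ncard = 2 * (n * n) := by
  have hsum := (subdividedKnn n).sum_degrees_eq_twice_card_edges
  simp only [Fintype.sum_sum_type, degree_leftVertex, degree_rightVertex, degree_subdivVertex,
    Finset.sum_const, Finset.card_univ, Fintype.card_prod, Fintype.card_fin, smul_eq_mul] at hsum
  rw [← SimpleGraph.coe_edgeFinset, Set.ncard_coe_finset]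
  omega

lemma ncard_add_ncard_compl_subdividedKnn (S : Set ((Fin n ⊕ Fin n) ⊕ Fin n × Fin n)) :
    S.ncard + Sᶜ.ncard = n * n + 2 * n := by
  rw [Set.ncard_add_ncard_compl]
  simp only [Nat.card_eq_fintype_card, Fintype.card_sum, Fintype.card_prod, Fintype.card_fin]
  ring

lemma ncard_forestEdges_subdividedKnn_le {S : Set ((Fin n ⊕ Fin n) ⊕ Fin n × Fin n)}
    (hS : ((subdividedKnn n).induce S).IsAcyclic) (hne : S.Nonempty) :
    (forestEdges (subdividedKnn n) S).ncard ≤ n * n + n := by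
  have hforest := ncard_forestEdges_lt_ncard hS hne
  have hcard := ncard_add_ncard_compl_subdividedKnn S
  suffices hcompl : n ≤ Sᶜ.ncard + 1 by omega
  obtain hn | hn := Nat.lt_or_ge n 2
  · omega
  · have hedges := ncard_edgeSet_le_add_mul_ncard_compl S
      fun v _ => degree_subdividedKnn_le hn v
    rw [ncard_edgeSet_subdividedKnn] at hedges
    have hmul : (n - 1) * (n - 1) ≤ (n - 1) * Sᶜ.ncard := by
      zify [show 1 ≤ n by omega] at *
      linarith
    have := Nat.le_of_mul_le_mul_left hmul (by omega)
    omega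

/-- The vertices that remain when every right vertex except `j` is deleted from the subdivided
`K_{n,n}`. They induce a tree of maximum size in it. -/
def rightTree (j : Fin n) : Set ((Fin n ⊕ Fin n) ⊕ Fin n × Fin n) :=
  (rightVertex '' {j}ᶜ)ᶜ

@[simp]
lemma leftVertex_mem_rightTree (i j : Fin n) : leftVertex i ∈ rightTree j := by
  simp [rightTree]

@[simp]
lemma rightVertex_mem_rightTree {i j : Fin n} : rightVertex i ∈ rightTree j ↔ i = j := by
  simp [rightTree]

@[simp]
lemma subdivVertex_mem_rightTree (p : Fin n × Fin n) (j : Fin n) :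
    subdivVertex p ∈ rightTree j := by
  simp [rightTree]

lemma connected_induce_rightTree (j : Fin n) :
    ((subdividedKnn n).induce (rightTree j)).Connected := by
  let T := (subdividedKnn n).induce (rightTree j)
  let root : rightTree j := ⟨rightVertex j, by simp⟩
  let left (i : Fin n) : rightTree j := ⟨leftVertex i, by simp⟩
  let subdiv (p : Fin n × Fin n) : rightTree j := ⟨subdivVertex p, by simp⟩
  have root_subdiv (i : Fin n) : T.Adj root (subdiv (i, j)) := adj_rightVertex.2 ⟨i, rfl⟩
  have left_subdiv (p : Fin n × Fin n) : T.Adj (left p.1) (subdiv p) := adj_leftVertex.2 ⟨p.2, rfl⟩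
  have root_left (i : Fin n) : T.Reachable root (left i) :=
    (root_subdiv i).reachable.trans (left_subdiv (i, j)).symm.reachable
  refine SimpleGraph.connected_iff_exists_forall_reachable _ |>.2 ⟨root, ?_⟩
  rintro ⟨(i | i) | p, hx⟩
  · exact root_left i
  · obtain rfl := rightVertex_mem_rightTree.1 hx
    exact .refl root
  · exact (root_left p.1).trans (left_subdiv p).reachable

lemma ncard_rightTree (j : Fin n) : (rightTree j).ncard = n * n + n + 1 := by
  have hcompl : (rightTree j)ᶜ.ncard = n - 1 := by
    rw [rightTree, compl_compl, Set.ncard_image_of_injective _ fun a b hab => by simpa using hab,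
      Set.ncard_compl]
    simp
  have hcard := ncard_add_ncard_compl_subdividedKnn (rightTree j)
  have := j.pos
  omega

lemma ncard_forestEdges_rightTree_le (j : Fin n) :
    (forestEdges (subdividedKnn n) (rightTree j)).ncard ≤ n * n + n := by
  have hsub : forestEdges (subdividedKnn n) (rightTree j) ⊆
      Set.range (fun p : Fin n × Fin n => s(leftVertex p.1, subdivVertex p)) ∪
        Set.range (fun i : Fin n => s(rightVertex j, subdivVertex (i, j))) := by
    intro e he
    obtain ⟨⟨a, b⟩, rfl | rfl⟩ := exists_eq_of_mem_edgeSet_subdividedKnn he.1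
    · exact .inl ⟨(a, b), rfl⟩
    · obtain rfl := rightVertex_mem_rightTree.1 (mk_mem_forestEdges.1 he).2.1
      exact .inr ⟨a, rfl⟩
  refine (Set.ncard_le_ncard hsub).trans <| (Set.ncard_union_le _ _).trans ?_
  simp only [← Set.image_univ]
  refine (Nat.add_le_add Set.ncard_image_le Set.ncard_image_le).trans ?_
  simp

lemma isStrongForest_rightTree (j : Fin n) {k : ℕ} (hk : k ≤ n * n + n) :
    IsStrongForest (subdividedKnn n) k (rightTree j) := by
  refine isStrongForest_of_connected (connected_induce_rightTree j) ?_ ?_ <;> rw [ncard_rightTree]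
  · exact Nat.lt_succ_of_le (ncard_forestEdges_rightTree_le j)
  · exact Nat.lt_succ_of_le hk

/-- The automorphism of the subdivided `K_{n,n}` exchanging its two sides. -/
def swapSides (n : ℕ) : subdividedKnn n ≃g subdividedKnn n where
  toEquiv := Equiv.sumCongr (Equiv.sumComm _ _) (Equiv.prodComm _ _)
  map_rel_iff' := by
    rintro ((_ | _) | _) ((_ | _) | _) <;> simp [subdividedKnn]

/-- The mirror image of `rightTree i`: all vertices except the left vertices other than `i`. -/
def leftTree (i : Fin n) : Set ((Fin n ⊕ Fin n) ⊕ Fin n × Fin n) :=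
  swapSides n ⁻¹' rightTree i

lemma isStrongForest_leftTree (i : Fin n) {k : ℕ} (hk : k ≤ n * n + n) :
    IsStrongForest (subdividedKnn n) k (leftTree i) :=
  (isStrongForest_rightTree i hk).preimage (swapSides n)

lemma mem_forestEdges_rightTree_or_leftTree {e : Sym2 ((Fin n ⊕ Fin n) ⊕ Fin n × Fin n)}
    (he : e ∈ (subdividedKnn n).edgeSet) (j : Fin n) :
    e ∈ forestEdges (subdividedKnn n) (rightTree j) ∨
      e ∈ forestEdges (subdividedKnn n) (leftTree j) := by
  obtain ⟨p, rfl | rfl⟩ := exists_eq_of_mem_edgeSet_subdividedKnn he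
  · exact .inl (mk_mem_forestEdges.2 ⟨he, by simp⟩)
  · exact .inr (mk_mem_forestEdges.2 ⟨he, by simp [leftTree, swapSides]⟩)

lemma KValid.le_of_subdividedKnn {k : ℕ} {e : Sym2 ((Fin n ⊕ Fin n) ⊕ Fin n × Fin n)}
    (he : KValid (subdividedKnn n) k e) : k ≤ n * n + n := by
  obtain ⟨S, hS, heS⟩ := he
  have hne : S.Nonempty := ⟨e.out.1, heS.2 _ e.out_fst_mem⟩
  exact (hS.le_ncard_forestEdges hne).trans (ncard_forestEdges_subdividedKnn_le hS.1 hne)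

lemma fStrong_subdividedKnn_le_two (n k : ℕ) : fStrong (subdividedKnn n) k ≤ 2 := by
  by_cases hvalid : ∃ e, KValid (subdividedKnn n) k e
  · obtain ⟨e₀, he₀⟩ := hvalid
    have hk := he₀.le_of_subdividedKnn
    obtain ⟨-, -, he₀, -⟩ := he₀
    obtain ⟨⟨j, -⟩, -⟩ := exists_eq_of_mem_edgeSet_subdividedKnn he₀
    refine Nat.sInf_le ⟨![rightTree j, leftTree j], ?_, ?_⟩
    · exact Fin.forall_fin_two.2 ⟨isStrongForest_rightTree j hk, isStrongForest_leftTree j hk⟩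
    · rintro e ⟨-, -, he, -⟩
      exact Fin.exists_fin_two.2 (mem_forestEdges_rightTree_or_leftTree he j)
  · have hzero : fStrong (subdividedKnn n) k ≤ 0 :=
      Nat.sInf_le ⟨Fin.elim0, fun i => i.elim0, fun e he => (hvalid ⟨e, he⟩).elim⟩
    exact hzero.trans (Nat.zero_le 2)

/-- The `i`-th branch set of a complete shallow minor of the subdivided `K_{n,n}`: the subdivided
star centred at left vertex `i`, of which only the ray to right vertex `i` has full length. -/
def branchSet (i : Fin n) : Set ((Fin n ⊕ Fin n) ⊕ Fin n × Fin n) :=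
  {leftVertex i, rightVertex i} ∪ Set.range fun j => subdivVertex (i, j)

lemma pairwise_disjoint_branchSet : Pairwise (Disjoint on (branchSet (n := n))) := by
  intro i i' hne
  rw [Function.onFun, Set.disjoint_left]
  rintro x ((rfl | rfl) | ⟨j, rfl⟩) <;> simp [branchSet, hne, hne.symm]

lemma exists_walk_length_le_two_branchSet (i : Fin n) :
    ∃ c : branchSet i, ∀ y : branchSet i,
      ∃ w : ((subdividedKnn n).induce (branchSet i)).Walk c y, w.length ≤ 2 := by
  let left : branchSet i := ⟨leftVertex i, .inl (.inl rfl)⟩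
  let right : branchSet i := ⟨rightVertex i, .inl (.inr rfl)⟩
  let subdiv (j : Fin n) : branchSet i := ⟨subdivVertex (i, j), .inr ⟨j, rfl⟩⟩
  have left_subdiv (j) : ((subdividedKnn n).induce (branchSet i)).Adj left (subdiv j) :=
    adj_leftVertex.2 ⟨j, rfl⟩
  have subdiv_right : ((subdividedKnn n).induce (branchSet i)).Adj (subdiv i) right :=
    adj_subdivVertex.2 (.inr rfl)
  refine ⟨left, ?_⟩
  rintro ⟨_, (rfl | rfl) | ⟨j, rfl⟩⟩
  · exact ⟨.nil, by simp⟩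
  · exact ⟨.cons (left_subdiv i) (.cons subdiv_right .nil), by simp⟩
  · exact ⟨.cons (left_subdiv j) .nil, by simp⟩

lemma isShallowMinor_two_subdividedKnn {V : Type*} (G : SimpleGraph V) (f : V ↪ Fin n) :
    IsShallowMinor 2 G (subdividedKnn n) := by
  refine ⟨fun v => branchSet (f v), pairwise_disjoint_branchSet.comp_of_injective f.injective,
    fun v => ?_, fun u v _ => ?_⟩
  · obtain ⟨c, hc⟩ := exists_walk_length_le_two_branchSet (f v)
    exact ⟨c, fun y => reachable_and_dist_le_iff.2 (hc y)⟩
  · exact ⟨subdivVertex (f u, f v), .inr ⟨f v, rfl⟩, rightVertex (f v), .inl (.inr rfl),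
      adj_subdivVertex.2 (.inr rfl)⟩

lemma exists_mem_subKnnClass_iso (hn : 1 ≤ n) :
    ∃ m, ∃ H ∈ subKnnClass m, Nonempty (subdividedKnn n ≃g H) :=
  let φ := (subdividedKnn n).overFinIso rfl
  ⟨_, _, ⟨n, hn, ⟨φ.symm⟩⟩, ⟨φ⟩⟩

end SubdividedKnn

/-- The class `C = {G_n : n ≥ 1}`, where `G_n` is obtained from `K_{n,n}`
by subdividing every edge once, satisfies `f_k(G) ≤ 2` for every `G ∈ C` and every `k ≥ 1`
(so it is `f_k`-bounded for every `k`), but it is not nowhere dense. -/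
theorem subKnnClass_fStrong_bounded_not_nowhereDense :
    (∀ k : ℕ, 1 ≤ k → ∀ (m : ℕ), ∀ G ∈ subKnnClass m, fStrong G k ≤ 2) ∧
    ¬ NowhereDense subKnnClass := by
  constructor
  · rintro k - m G ⟨n, -, ⟨φ⟩⟩
    exact (fStrong_congr φ k).trans_le (fStrong_subdividedKnn_le_two n k)
  · intro hdense
    obtain ⟨m, G, hG⟩ := hdense 2
    obtain ⟨N, H, hH, ⟨φ⟩⟩ := exists_mem_subKnnClass_iso (Nat.le_add_left 1 m)
    exact hG ⟨N, H, hH, (isShallowMinor_two_subdividedKnn G Fin.castSuccEmb).of_copy φ.toCopy⟩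

end InducedArboricity
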